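/- Under the stated assumptions on the family Q(t,·), for every U ∈ ℝ^{2×2}_sym the function (A, M) ↦ ∫_{−1/2}^{1/2} Q₂( t, 𝟙(t>0)·(1/2)U − (t·A + M) ) dt on ℝ^{2×2}_sym × ℝ^{2×2}_sym has exactly one minimizer (Â(U), M̂(U)); the map U ↦ Â(U) is linear in U and satisfies |Â(U)| ≤ ((3 + √3·C_W)/4)·|U| for all U ∈ ℝ^{2×2}_sym. (The map U ↦ Â(U) is the coupling map 𝔹 of the bending model; in particular |𝔹(U)| ≤ C·|U| with C depending only on C_W.) -/

import Mathlib

/-!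
The functional is a positive definite quadratic form `Φ` in `(U, A, M)`, so its minimization over
`(A, M)` is a Schur complement, used twice here: `exists_schur` says that if a symmetric bilinear
form is positive definite along a linear map `E : D → V`, then completing the square in `d` at
`v + E d` has a vertex depending linearly on `v`.

* With `E d = sym (d ⊗ e₃)` this shows that `Q₂(t, ·)` is again a quadratic form, represented by a
  bilinear form `β t`; the two-sided bound on `Q` gives `C_W⁻¹|B|² ≤ Q₂(t, B) ≤ C_W|B|²`
  (`Q2fam_quad`, `Q2fam_bounds`). The infimum over `d` may be taken over a countable dense set,
  whence measurability in `t` (`measurable_Q2fam`).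
* Integrating `β t` along the strain `𝟙(t>0)U/2 - (tA + M)` gives `Φ`, and with `E (A, M) = (0, A, M)`
  the Schur complement gives existence, uniqueness and linearity of the minimizer.

For the bound, compare with the unweighted `L²` projection `p₀ = (3U/4, U/4)` of `𝟙(t>0)U/2` onto
`{tA + M}`, whose squared residual is `|U|²/64`. If `(δA, δM)` is the difference of the minimizer and
`p₀`, completing the square and the nonnegativity of the minimum yield
`C_W⁻¹(|δA|²/12 + |δM|²) ≤ Φ(E δ, E δ) ≤ F_U(p₀) ≤ C_W|U|²/64`, so `|δA| ≤ √3·C_W|U|/4`, and the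
triangle inequality adds `|3U/4|`.
-/

open MeasureTheory Matrix Filter Topology

noncomputable section

/-- 2×2 real matrices. -/
abbrev M2 : Type := Matrix (Fin 2) (Fin 2) ℝ
/-- 3×3 real matrices. -/
abbrev M3 : Type := Matrix (Fin 3) (Fin 3) ℝ

/-- squared Frobenius norm of a 2×2 matrix -/
def frobSq2 (A : M2) : ℝ := ∑ i, ∑ j, (A i j) ^ 2

/-- squared Frobenius norm of a 3×3 matrix -/
def frobSq3 (A : M3) : ℝ := ∑ i, ∑ j, (A i j) ^ 2

/-- symmetric part of a matrix: `sym G = (G + Gᵀ)/2` -/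
def symPart (G : M3) : M3 := (1 / 2 : ℝ) • (G + Gᵀ)

/-- `ι A` : the 3×3 matrix with upper-left 2×2 block `A` and zeros elsewhere -/
def iota (A : M2) : M3 :=
  Matrix.of fun i j =>
    if hi : (i : ℕ) < 2 then (if hj : (j : ℕ) < 2 then A ⟨i, hi⟩ ⟨j, hj⟩ else 0) else 0

/-- `d ⊗ e₃` : the 3×3 matrix whose third column is `d` and whose other entries vanish -/
def tensorE3 (d : Fin 3 → ℝ) : M3 :=
  Matrix.of fun i j => if j = (2 : Fin 3) then d i else 0

/-- the symmetric 2×2 real matrices, as a submodule of `M2` -/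
def Sym2M : Submodule ℝ M2 where
  carrier := {A : M2 | A.IsSymm}
  add_mem' := fun ha hb => Matrix.IsSymm.add ha hb
  zero_mem' := Matrix.isSymm_zero
  smul_mem' := fun c _ ha => Matrix.IsSymm.smul ha c

/-- the reduced quadratic form `Q₂(t,B) = inf_{d∈ℝ³} Q(t, ι(B) + sym(d⊗e₃))` -/
def Q2fam (Q : ℝ → M3 → ℝ) (t : ℝ) (B : M2) : ℝ :=
  ⨅ d : Fin 3 → ℝ, Q t (iota B + symPart (tensorE3 d))

/-- the effective bending stiffness
`Q_el(A) = inf_{M symmetric} ∫_{−1/2}^{1/2} Q₂(t, t·A + M) dt` -/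
def Qel (Q : ℝ → M3 → ℝ) (A : M2) : ℝ :=
  ⨅ M : {M : M2 // M.IsSymm},
    ∫ t in Set.Ioo (-(1 : ℝ) / 2) (1 / 2), Q2fam Q t (t • A + M.val)

/-- the residual energy
`E_res(U) = inf_{A,M symmetric} ∫_{−1/2}^{1/2} Q₂(t, t·A + M + 𝟙(t>0)·(1/2)U) dt` -/
def Eres (Q : ℝ → M3 → ℝ) (U : M2) : ℝ :=
  ⨅ p : {M : M2 // M.IsSymm} × {M : M2 // M.IsSymm},
    ∫ t in Set.Ioo (-(1 : ℝ) / 2) (1 / 2),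
      Q2fam Q t (t • p.1.val + p.2.val + (if 0 < t then (1 : ℝ) else 0) • ((1 / 2 : ℝ) • U))

/-! ### Completing the square -/

/-- Completing the square along `E`: the vertex `s v` of `d ↦ b (v + E d) (v + E d)` is linear
in `v`. It exists because `d ↦ b (E d) (E ·)` is injective, hence an isomorphism of `D` with its
dual. -/
lemma exists_schur {V D : Type*} [AddCommGroup V] [Module ℝ V] [AddCommGroup D] [Module ℝ D]
    [FiniteDimensional ℝ D] (b : V →ₗ[ℝ] V →ₗ[ℝ] ℝ) (hb : ∀ u v, b u v = b v u)
    (E : D →ₗ[ℝ] V) (hpos : ∀ d, d ≠ 0 → 0 < b (E d) (E d)) :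
    ∃ s : V →ₗ[ℝ] D, ∀ v d, b (v + E d) (v + E d)
      = b (v + E (s v)) (v + E (s v)) + b (E (d - s v)) (E (d - s v)) := by
  let T : D →ₗ[ℝ] Module.Dual ℝ D := b.compl₁₂ E E
  have hT : Function.Injective T := by
    rw [← LinearMap.ker_eq_bot, LinearMap.ker_eq_bot']
    intro d hd
    by_contra hne
    have h1 : T d d = 0 := by rw [hd]; rfl
    exact (hpos d hne).ne' h1
  let e := T.linearEquivOfInjective hT (Subspace.dual_finrank_eq (K := ℝ) (V := D)).symm
  refine ⟨-(e.symm.toLinearMap ∘ₗ b.compl₁₂ LinearMap.id E), fun v d => ?_⟩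
  set s := (-(e.symm.toLinearMap ∘ₗ b.compl₁₂ LinearMap.id E) : V →ₗ[ℝ] D) v with hs
  -- `s` is chosen to make `v + E s` orthogonal to the range of `E`
  have horth : ∀ d', b (v + E s) (E d') = 0 := by
    intro d'
    have h1 : T s = - b.compl₁₂ LinearMap.id E v := by
      have : e s = - b.compl₁₂ LinearMap.id E v := by
        rw [hs]; simp
      rw [← this]; rfl
    have h2 : b (E s) (E d') = - b v (E d') := by
      have := congrArg (fun f : Module.Dual ℝ D => f d') h1
      simpa [T] using this
    rw [map_add, LinearMap.add_apply, h2]; ring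
  have hsplit : v + E d = (v + E s) + E (d - s) := by rw [map_sub]; abel
  rw [hsplit, map_add b (v + E s), LinearMap.add_apply, map_add (b (v + E s)),
    map_add (b (E (d - s))), horth, hb (E (d - s)) (v + E s), horth]
  ring

/-! ### Frobenius norms -/

lemma frobSq2_nonneg (A : M2) : 0 ≤ frobSq2 A :=
  Finset.sum_nonneg fun _ _ => Finset.sum_nonneg fun _ _ => sq_nonneg _

lemma sqrt_frobSq2_add_le (A B : M2) :
    √(frobSq2 (A + B)) ≤ √(frobSq2 A) + √(frobSq2 B) := by
  let _ : NormedAddCommGroup M2 := Matrix.frobeniusNormedAddCommGroup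
  have h : ∀ A : M2, √(frobSq2 A) = ‖A‖ := by
    intro A
    rw [Matrix.frobenius_norm_def, Real.sqrt_eq_rpow]
    simp [frobSq2]
  rw [h, h, h]
  exact norm_add_le A B

lemma frobSq2_smul (c : ℝ) (A : M2) : frobSq2 (c • A) = c ^ 2 * frobSq2 A := by
  simp [frobSq2, Fin.sum_univ_two]; ring

lemma frobSq2_le_embed (B : M2) (hB : B.IsSymm) (d : Fin 3 → ℝ) :
    frobSq2 B ≤ frobSq3 (symPart (iota B + symPart (tensorE3 d))) := by
  have h := hB.apply 0 1
  simp [frobSq2, frobSq3, symPart, iota, tensorE3, Fin.sum_univ_succ]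
  rw [h]
  nlinarith [sq_nonneg (d 0), sq_nonneg (d 1), sq_nonneg (d 2)]

lemma frobSq3_embed_zero (B : M2) (hB : B.IsSymm) :
    frobSq3 (symPart (iota B + symPart (tensorE3 0))) = frobSq2 B := by
  have h := hB.apply 0 1
  simp [frobSq2, frobSq3, symPart, iota, tensorE3, Fin.sum_univ_succ]
  rw [h]
  ring

lemma frobSq3_tensor_pos (d : Fin 3 → ℝ) (hd : d ≠ 0) :
    0 < frobSq3 (symPart (symPart (tensorE3 d))) := by
  have h : frobSq3 (symPart (symPart (tensorE3 d)))
      = (d 0 ^ 2 + d 1 ^ 2) / 2 + d 2 ^ 2 := by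
    simp [frobSq3, symPart, tensorE3, Fin.sum_univ_succ]
    ring
  rw [h]
  by_contra hn
  apply hd
  have h0 : d 0 = 0 := by nlinarith [sq_nonneg (d 0), sq_nonneg (d 1), sq_nonneg (d 2)]
  have h1 : d 1 = 0 := by nlinarith [sq_nonneg (d 0), sq_nonneg (d 1), sq_nonneg (d 2)]
  have h2 : d 2 = 0 := by nlinarith [sq_nonneg (d 0), sq_nonneg (d 1), sq_nonneg (d 2)]
  ext i; fin_cases i <;> simp [h0, h1, h2]

/-! ### The reduced form -/

/-- `ι` restricted to the symmetric matrices, as a linear map. -/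
def iotaL : Sym2M →ₗ[ℝ] M3 where
  toFun B := iota B
  map_add' A B := by
    ext i j
    simp only [iota, Matrix.of_apply, Matrix.add_apply, Submodule.coe_add]
    split_ifs <;> simp
  map_smul' c B := by
    ext i j
    simp only [iota, Matrix.of_apply, Matrix.smul_apply, Submodule.coe_smul]
    split_ifs <;> simp

/-- `d ↦ sym (d ⊗ e₃)` as a linear map. -/
def tensorL : (Fin 3 → ℝ) →ₗ[ℝ] M3 where
  toFun d := symPart (tensorE3 d)
  map_add' a b := by
    ext i j
    simp only [symPart, tensorE3, Matrix.smul_apply, Matrix.add_apply, Matrix.transpose_apply,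
      Matrix.of_apply, Pi.add_apply, smul_eq_mul]
    split_ifs <;> ring
  map_smul' c a := by
    ext i j
    simp only [symPart, tensorE3, Matrix.smul_apply, Matrix.add_apply, Matrix.transpose_apply,
      Matrix.of_apply, Pi.smul_apply, smul_eq_mul, RingHom.id_apply]
    split_ifs <;> ring

lemma Q2fam_quad (CW : ℝ) (hCW : 0 < CW) (Q : ℝ → M3 → ℝ) (t : ℝ)
    (hquad : ∃ b : M3 →ₗ[ℝ] M3 →ₗ[ℝ] ℝ, (∀ u v, b u v = b v u) ∧ ∀ G, Q t G = b G G)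
    (hbound : ∀ G : M3,
      (1 / CW) * frobSq3 (symPart G) ≤ Q t G ∧ Q t G ≤ CW * frobSq3 (symPart G)) :
    ∃ β : Sym2M →ₗ[ℝ] Sym2M →ₗ[ℝ] ℝ, (∀ u v, β u v = β v u) ∧
      ∀ B : Sym2M, Q2fam Q t B = β B B := by
  obtain ⟨b, hb, hQ⟩ := hquad
  have hpos : ∀ d, d ≠ 0 → 0 < b (tensorL d) (tensorL d) := by
    intro d hd
    rw [← hQ]
    exact lt_of_lt_of_le (mul_pos (by positivity) (frobSq3_tensor_pos d hd)) (hbound _).1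
  obtain ⟨s, hs⟩ := exists_schur b hb tensorL hpos
  let P : Sym2M →ₗ[ℝ] M3 := (LinearMap.id + tensorL ∘ₗ s) ∘ₗ iotaL
  refine ⟨b.compl₁₂ P P, fun u v => hb _ _, fun B => ?_⟩
  have hmin : ∀ d, b (P B) (P B) ≤ Q t (iota B + symPart (tensorE3 d)) := by
    intro d
    rw [hQ]
    change b (iotaL B + tensorL (s (iotaL B))) (iotaL B + tensorL (s (iotaL B)))
      ≤ b (iotaL B + tensorL d) (iotaL B + tensorL d)
    rw [hs (iotaL B) d, le_add_iff_nonneg_right]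
    by_cases h : d - s (iotaL B) = 0
    · simp [h]
    · exact (hpos _ h).le
  apply le_antisymm
  · refine (ciInf_le ⟨_, Set.forall_mem_range.2 hmin⟩ (s (iotaL B))).trans ?_
    rw [hQ]; rfl
  · exact le_ciInf hmin

lemma Q2fam_bounds (CW : ℝ) (hCW : 0 < CW) (Q : ℝ → M3 → ℝ) (t : ℝ)
    (hbound : ∀ G : M3,
      (1 / CW) * frobSq3 (symPart G) ≤ Q t G ∧ Q t G ≤ CW * frobSq3 (symPart G))
    (B : Sym2M) :
    (1 / CW) * frobSq2 B ≤ Q2fam Q t B ∧ Q2fam Q t B ≤ CW * frobSq2 B := by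
  have hlow : ∀ d, (1 / CW) * frobSq2 B ≤ Q t (iota B + symPart (tensorE3 d)) := fun d =>
    (mul_le_mul_of_nonneg_left (frobSq2_le_embed B B.2 d) (by positivity)).trans (hbound _).1
  refine ⟨le_ciInf hlow, ?_⟩
  refine (ciInf_le ⟨_, Set.forall_mem_range.2 hlow⟩ 0).trans ((hbound _).2.trans ?_)
  rw [frobSq3_embed_zero B B.2]

/-- Since `Q t` is continuous, the infimum over `d` can be taken over a countable dense set. This
holds for every `t`, also where `Q t` is unbounded below and the infimum takes its junk value. -/
lemma measurable_Q2fam (Q : ℝ → M3 → ℝ)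
    (hquad : ∀ t, ∃ b : M3 →ₗ[ℝ] M3 →ₗ[ℝ] ℝ, (∀ u v, b u v = b v u) ∧ ∀ G, Q t G = b G G)
    (hmeas : ∀ G, Measurable fun t => Q t G) (B : M2) :
    Measurable fun t => Q2fam Q t B := by
  obtain ⟨S, hSc, hSd⟩ := TopologicalSpace.exists_countable_dense (Fin 3 → ℝ)
  have hcont : ∀ t, Continuous fun d : Fin 3 → ℝ => Q t (iota B + symPart (tensorE3 d)) := by
    intro t
    obtain ⟨b, hb, hQ⟩ := hquad t
    let T := (b.compl₁₂ tensorL tensorL).toContinuousBilinearMap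
    let ℓ := (b (iota B) ∘ₗ tensorL).toContinuousLinearMap
    have h : (fun d : Fin 3 → ℝ => Q t (iota B + symPart (tensorE3 d)))
        = fun d => b (iota B) (iota B) + 2 * ℓ d + T d d := by
      funext d
      rw [hQ]
      change b (iota B + tensorL d) (iota B + tensorL d)
        = b (iota B) (iota B) + 2 * b (iota B) (tensorL d) + b (tensorL d) (tensorL d)
      simp only [map_add, LinearMap.add_apply, hb (tensorL d) (iota B)]
      ring
    rw [h]
    fun_prop
  have h : (fun t => Q2fam Q t B) =
      fun t => ⨅ d : S, Q t (iota B + symPart (tensorE3 d)) := by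
    funext t
    exact (hSd.ciInf' (hcont t)).symm
  rw [h]
  have : Countable S := hSc
  exact Measurable.iInf fun d => hmeas _

/-! ### The integrated form -/

/-- The thickness interval `(-1/2, 1/2)`. -/
abbrev thick : Set ℝ := Set.Ioo (-(1 : ℝ) / 2) (1 / 2)

/-- The strain `𝟙(t>0)·(1/2)U - (t·A + M)` as a linear map of `(U, A, M)`. -/
def strain (t : ℝ) : Sym2M × Sym2M × Sym2M →ₗ[ℝ] Sym2M :=
  ((if 0 < t then (1 : ℝ) else 0) * (1 / 2)) • LinearMap.fst ℝ _ _
    - (t • (LinearMap.fst ℝ Sym2M Sym2M ∘ₗ LinearMap.snd ℝ _ _)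
      + LinearMap.snd ℝ Sym2M Sym2M ∘ₗ LinearMap.snd ℝ _ _)

lemma strain_apply (t : ℝ) (x : Sym2M × Sym2M × Sym2M) :
    strain t x = ((if 0 < t then (1 : ℝ) else 0) * (1 / 2)) • x.1 - (t • x.2.1 + x.2.2) := rfl

lemma measurable_step : Measurable fun t : ℝ => if 0 < t then (1 : ℝ) else 0 :=
  Measurable.ite measurableSet_Ioi measurable_const measurable_const

/-- By polarization, measurability and boundedness on the diagonal give integrability of all
matrix elements. -/
lemma integrable_bilin (β : ℝ → Sym2M →ₗ[ℝ] Sym2M →ₗ[ℝ] ℝ) (C : ℝ)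
    (hsymm : ∀ t ∈ thick, ∀ u v, β t u v = β t v u)
    (hlow : ∀ t ∈ thick, ∀ B, 0 ≤ β t B B)
    (hup : ∀ t ∈ thick, ∀ B : Sym2M, β t B B ≤ C * frobSq2 B)
    (hmeas : ∀ B, AEMeasurable (fun t => β t B B) (volume.restrict thick)) (X Y : Sym2M) :
    Integrable (fun t => β t X Y) (volume.restrict thick) := by
  have hdiag : ∀ B, Integrable (fun t => β t B B) (volume.restrict thick) := by
    intro B
    have hfin : IsFiniteMeasure (volume.restrict thick) := by
      refine ⟨?_⟩; simp
    refine Integrable.of_bound (hmeas B).aestronglyMeasurable (C * frobSq2 B) ?_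
    refine (ae_restrict_mem measurableSet_Ioo).mono fun t ht => ?_
    rw [Real.norm_of_nonneg (hlow t ht B)]
    exact hup t ht B
  have h := (((hdiag (X + Y)).sub (hdiag X)).sub (hdiag Y)).div_const 2
  refine h.congr ((ae_restrict_mem measurableSet_Ioo).mono fun t ht => ?_)
  simp only [Pi.sub_apply, map_add, LinearMap.add_apply, hsymm t ht Y X]
  ring

lemma integrable_strain (β : ℝ → Sym2M →ₗ[ℝ] Sym2M →ₗ[ℝ] ℝ)
    (h : ∀ X Y, Integrable (fun t => β t X Y) (volume.restrict thick))
    (x y : Sym2M × Sym2M × Sym2M) :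
    Integrable (fun t => β t (strain t x) (strain t y)) (volume.restrict thick) := by
  have hχ : ∀ f : ℝ → ℝ, Integrable f (volume.restrict thick) →
      Integrable (fun t => (if 0 < t then (1 : ℝ) else 0) * f t) (volume.restrict thick) := by
    intro f hf
    refine hf.bdd_mul (c := 1) measurable_step.aestronglyMeasurable (.of_forall fun t => ?_)
    split_ifs <;> simp
  have ht : ∀ f : ℝ → ℝ, Integrable f (volume.restrict thick) →
      Integrable (fun t => t * f t) (volume.restrict thick) := by
    intro f hf
    refine hf.bdd_mul (c := 1) (f := fun t => t) measurable_id.aestronglyMeasurable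
      ((ae_restrict_mem measurableSet_Ioo).mono fun t ht => ?_)
    rw [Real.norm_eq_abs, abs_le]
    constructor <;> linarith [ht.1, ht.2]
  -- integrability of one linear slot, then of the other
  have key : ∀ L : ℝ → Sym2M →ₗ[ℝ] ℝ, (∀ X, Integrable (fun t => L t X) (volume.restrict thick)) →
      ∀ x, Integrable (fun t => L t (strain t x)) (volume.restrict thick) := by
    intro L hL x
    have := ((hχ _ (hL x.1)).const_mul (1 / 2)).sub ((ht _ (hL x.2.1)).add (hL x.2.2))
    refine this.congr (.of_forall fun t => ?_)
    simp only [strain_apply, map_sub, map_add, map_smul, smul_eq_mul, Pi.sub_apply, Pi.add_apply]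
    ring
  exact key (fun t => (β t).flip (strain t y)) (fun X => key (fun t => β t X) (h X) y) x

/-- The squared `L²` norm of `𝟙(t>0)u - (ta + m)`, for a single matrix entry. -/
lemma integral_thick_profile (u a m : ℝ) :
    Integrable (fun t => ((if 0 < t then (1 : ℝ) else 0) * u - (t * a + m)) ^ 2)
      (volume.restrict thick) ∧
    ∫ t in thick, ((if 0 < t then (1 : ℝ) else 0) * u - (t * a + m)) ^ 2
      = u ^ 2 / 2 - u * a / 4 - u * m + a ^ 2 / 12 + m ^ 2 := by
  set f : ℝ → ℝ := fun t => ((if 0 < t then (1 : ℝ) else 0) * u - (t * a + m)) ^ 2 with hf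
  have h1 : IntervalIntegrable f volume (-(1:ℝ)/2) 0 := by
    have : IntervalIntegrable (fun t : ℝ => (t * a + m) ^ 2) volume (-(1:ℝ)/2) 0 :=
      Continuous.intervalIntegrable (by fun_prop) _ _
    refine this.congr fun t ht => ?_
    rw [Set.uIoc_of_le (by norm_num)] at ht
    simp [f, not_lt.2 ht.2]
    ring
  have h2 : IntervalIntegrable f volume 0 (1/2) := by
    have : IntervalIntegrable (fun t : ℝ => (u - (t * a + m)) ^ 2) volume 0 (1/2) :=
      Continuous.intervalIntegrable (by fun_prop) _ _
    refine this.congr fun t ht => ?_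
    rw [Set.uIoc_of_le (by norm_num)] at ht
    simp [f, ht.1]
  have e1 : ∫ t in (-(1:ℝ)/2)..0, f t =
      ∫ t in (-(1:ℝ)/2)..0, (a ^ 2 * t ^ 2 + (2 * a * m) * t + m ^ 2) := by
    refine intervalIntegral.integral_congr_ae (.of_forall fun t ht => ?_)
    rw [Set.uIoc_of_le (by norm_num)] at ht
    simp [f, not_lt.2 ht.2]
    ring
  have e2 : ∫ t in (0:ℝ)..(1/2), f t =
      ∫ t in (0:ℝ)..(1/2), (a ^ 2 * t ^ 2 + (2 * a * (m - u)) * t + (m - u) ^ 2) := by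
    refine intervalIntegral.integral_congr_ae (.of_forall fun t ht => ?_)
    rw [Set.uIoc_of_le (by norm_num)] at ht
    simp [f, ht.1]
    ring
  have hpoly : ∀ p q r x y : ℝ, ∫ t in x..y, (p * t ^ 2 + q * t + r)
      = p * (y ^ 3 - x ^ 3) / 3 + q * (y ^ 2 - x ^ 2) / 2 + r * (y - x) := by
    intro p q r x y
    rw [intervalIntegral.integral_add, intervalIntegral.integral_add,
      intervalIntegral.integral_const_mul, intervalIntegral.integral_const_mul, integral_pow,
      integral_id, intervalIntegral.integral_const]
    · simp only [smul_eq_mul]; norm_num; ring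
    all_goals exact Continuous.intervalIntegrable (by fun_prop) _ _
  have h12 := h1.trans h2
  refine ⟨((intervalIntegrable_iff_integrableOn_Ioo_of_le (by norm_num)).1 h12), ?_⟩
  rw [← integral_Ioc_eq_integral_Ioo, ← intervalIntegral.integral_of_le (by norm_num),
    ← intervalIntegral.integral_add_adjacent_intervals h1 h2, e1, e2, hpoly, hpoly]
  ring

lemma integral_frobSq2_strain (x : Sym2M × Sym2M × Sym2M) :
    Integrable (fun t => frobSq2 (strain t x)) (volume.restrict thick) ∧
    ∫ t in thick, frobSq2 (strain t x)
      = ∑ i, ∑ j, (((1 / 2) * (x.1 : M2) i j) ^ 2 / 2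
        - ((1 / 2) * (x.1 : M2) i j) * (x.2.1 : M2) i j / 4
        - ((1 / 2) * (x.1 : M2) i j) * (x.2.2 : M2) i j
        + (x.2.1 : M2) i j ^ 2 / 12 + (x.2.2 : M2) i j ^ 2) := by
  have h : (fun t => frobSq2 (strain t x)) = fun t => ∑ i, ∑ j,
      ((if 0 < t then (1 : ℝ) else 0) * ((1 / 2) * (x.1 : M2) i j)
        - (t * (x.2.1 : M2) i j + (x.2.2 : M2) i j)) ^ 2 := by
    funext t
    simp only [frobSq2, strain_apply, Submodule.coe_sub, Submodule.coe_add, Submodule.coe_smul,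
      Matrix.sub_apply, Matrix.add_apply, Matrix.smul_apply, smul_eq_mul, mul_assoc]
  have hI := fun i j => integral_thick_profile ((1 / 2) * (x.1 : M2) i j)
    ((x.2.1 : M2) i j) ((x.2.2 : M2) i j)
  rw [h]
  refine ⟨integrable_finsetSum _ fun i _ => integrable_finsetSum _ fun j _ => (hI i j).1, ?_⟩
  rw [integral_finsetSum _ fun i _ => integrable_finsetSum _ fun j _ => (hI i j).1]
  refine Finset.sum_congr rfl fun i _ => ?_
  rw [integral_finsetSum _ fun j _ => (hI i j).1]
  exact Finset.sum_congr rfl fun j _ => (hI i j).2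

lemma frobSq2_pos (A : M2) (hA : A ≠ 0) : 0 < frobSq2 A := by
  refine (frobSq2_nonneg A).lt_of_ne' fun h => hA ?_
  ext i j
  have h1 := (Finset.sum_eq_zero_iff_of_nonneg
    fun i _ => Finset.sum_nonneg fun j _ => sq_nonneg (A i j)).1 h i (Finset.mem_univ i)
  have h2 := (Finset.sum_eq_zero_iff_of_nonneg fun j _ => sq_nonneg (A i j)).1 h1 j
    (Finset.mem_univ j)
  simpa using h2

lemma integral_strain_zero (p : Sym2M × Sym2M) :
    ∫ t in thick, frobSq2 (strain t (0, p)) = frobSq2 p.1 / 12 + frobSq2 p.2 := by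
  rw [(integral_frobSq2_strain _).2]
  simp [frobSq2, Fin.sum_univ_two]
  ring

/-- `(3U/4, U/4)` is the unweighted `L²` projection; this is the square of its residual. -/
lemma integral_strain_trial (U : Sym2M) :
    ∫ t in thick, frobSq2 (strain t (U, (3 / 4 : ℝ) • U, (1 / 4 : ℝ) • U)) = frobSq2 U / 64 := by
  rw [(integral_frobSq2_strain _).2]
  simp [frobSq2, Fin.sum_univ_two]
  ring

/-- for every symmetric `U` the functional
`(A,M) ↦ ∫_{−1/2}^{1/2} Q₂(t, 𝟙(t>0)·(1/2)U − (t·A+M)) dt` has exactly one minimizer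
`(Â(U), M̂(U))`; the map `U ↦ Â(U)` is linear and `|Â(U)| ≤ ((3+√3·C_W)/4)|U|`. -/
theorem statement9 (CW : ℝ) (hCW : 0 < CW) (Q : ℝ → M3 → ℝ)
    (hquad : ∀ t, ∃ b : M3 →ₗ[ℝ] M3 →ₗ[ℝ] ℝ, (∀ u v, b u v = b v u) ∧ ∀ G, Q t G = b G G)
    (hmeas : ∀ G, Measurable fun t => Q t G)
    (hbound : ∀ t ∈ Set.Ioo (-(1 : ℝ) / 2) (1 / 2), ∀ G : M3,
      (1 / CW) * frobSq3 (symPart G) ≤ Q t G ∧ Q t G ≤ CW * frobSq3 (symPart G)) :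
    let F : Sym2M → Sym2M × Sym2M → ℝ := fun U p =>
      ∫ t in Set.Ioo (-(1 : ℝ) / 2) (1 / 2),
        Q2fam Q t ((if 0 < t then (1 : ℝ) else 0) • ((1 / 2 : ℝ) • (U : M2))
          - (t • (p.1 : M2) + (p.2 : M2)))
    ∃ Ahat Mhat : Sym2M → Sym2M,
      (∀ U : Sym2M,
        (∀ p : Sym2M × Sym2M, F U (Ahat U, Mhat U) ≤ F U p) ∧
        (∀ p : Sym2M × Sym2M, (∀ q : Sym2M × Sym2M, F U p ≤ F U q) → p = (Ahat U, Mhat U))) ∧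
      IsLinearMap ℝ Ahat ∧
      ∀ U : Sym2M, Real.sqrt (frobSq2 (Ahat U : M2))
        ≤ (3 + Real.sqrt 3 * CW) / 4 * Real.sqrt (frobSq2 (U : M2)) := by
  intro F
  have hex := fun t (ht : t ∈ thick) => Q2fam_quad CW hCW Q t (hquad t) (hbound t ht)
  choose! β hβs hβ using hex
  have hlow : ∀ t ∈ thick, ∀ B : Sym2M, (1 / CW) * frobSq2 B ≤ β t B B := fun t ht B =>
    hβ t ht B ▸ (Q2fam_bounds CW hCW Q t (hbound t ht) B).1
  have hup : ∀ t ∈ thick, ∀ B : Sym2M, β t B B ≤ CW * frobSq2 B := fun t ht B =>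
    hβ t ht B ▸ (Q2fam_bounds CW hCW Q t (hbound t ht) B).2
  have hint := integrable_strain β <| integrable_bilin β CW hβs
    (fun t ht B => (mul_nonneg (by positivity) (frobSq2_nonneg B)).trans (hlow t ht B)) hup
    (fun B => ((measurable_Q2fam Q hquad hmeas B).aemeasurable).congr
      ((ae_restrict_mem measurableSet_Ioo).mono fun t ht => hβ t ht B))
  -- the functional as a symmetric bilinear form in the triple `(U, A, M)`
  let Φ : (Sym2M × Sym2M × Sym2M) →ₗ[ℝ] (Sym2M × Sym2M × Sym2M) →ₗ[ℝ] ℝ :=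
    LinearMap.mk₂ ℝ (fun x y => ∫ t in thick, β t (strain t x) (strain t y))
      (fun x x' y => by
        rw [← integral_add (hint x y) (hint x' y)]
        simp only [map_add, LinearMap.add_apply])
      (fun c x y => by
        rw [smul_eq_mul, ← integral_const_mul]
        simp only [map_smul, LinearMap.smul_apply, smul_eq_mul])
      (fun x y y' => by
        rw [← integral_add (hint x y) (hint x y')]
        simp only [map_add])
      (fun c x y => by
        rw [smul_eq_mul, ← integral_const_mul]
        simp only [map_smul, smul_eq_mul])
  have hΦ : ∀ x y, Φ x y = ∫ t in thick, β t (strain t x) (strain t y) := fun x y => rfl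
  have hΦs : ∀ x y, Φ x y = Φ y x := fun x y =>
    setIntegral_congr_fun measurableSet_Ioo fun t ht => hβs t ht _ _
  have hΦlow : ∀ x, (1 / CW) * ∫ t in thick, frobSq2 (strain t x) ≤ Φ x x := by
    intro x
    rw [← integral_const_mul, hΦ]
    exact setIntegral_mono_on ((integral_frobSq2_strain x).1.const_mul _) (hint x x)
      measurableSet_Ioo fun t ht => hlow t ht _
  have hΦup : ∀ x, Φ x x ≤ CW * ∫ t in thick, frobSq2 (strain t x) := by
    intro x
    rw [← integral_const_mul, hΦ]
    exact setIntegral_mono_on (hint x x) ((integral_frobSq2_strain x).1.const_mul _)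
      measurableSet_Ioo fun t ht => hup t ht _
  have hΦnn : ∀ x, 0 ≤ Φ x x := fun x => le_trans
    (mul_nonneg (by positivity) (integral_nonneg fun t => frobSq2_nonneg _)) (hΦlow x)
  have hF : ∀ U p, F U p = Φ (U, p) (U, p) := by
    intro U p
    refine setIntegral_congr_fun measurableSet_Ioo fun t ht => ?_
    have h : (if 0 < t then (1 : ℝ) else 0) • ((1 / 2 : ℝ) • (U : M2))
          - (t • (p.1 : M2) + (p.2 : M2)) = (strain t (U, p) : M2) := by
      rw [strain_apply, mul_smul]; rfl
    change Q2fam Q t (_ - _) = _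
    rw [h]
    exact hβ t ht _
  let E : Sym2M × Sym2M →ₗ[ℝ] Sym2M × Sym2M × Sym2M := LinearMap.inr ℝ _ _
  have hElow : ∀ p, (1 / CW) * (frobSq2 p.1 / 12 + frobSq2 p.2) ≤ Φ (E p) (E p) := fun p =>
    integral_strain_zero p ▸ hΦlow (0, p)
  have hpos : ∀ p, p ≠ 0 → 0 < Φ (E p) (E p) := by
    intro p hp
    refine lt_of_lt_of_le (mul_pos (by positivity) ?_) (hElow p)
    have h1 := frobSq2_nonneg p.1
    have h2 := frobSq2_nonneg p.2
    by_cases hA : p.1 = 0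
    · have hM : (p.2 : M2) ≠ 0 := fun h => hp (Prod.ext hA (Subtype.ext h))
      linarith [frobSq2_pos _ hM]
    · have hA' : (p.1 : M2) ≠ 0 := fun h => hA (Subtype.ext h)
      linarith [frobSq2_pos _ hA']
  obtain ⟨s, hs⟩ := exists_schur Φ hΦs E hpos
  let S : Sym2M →ₗ[ℝ] Sym2M × Sym2M := s ∘ₗ LinearMap.inl ℝ _ _
  -- `S U` is the minimizer: the energy of any other `p` exceeds its energy by a square
  have hsplit : ∀ U p, F U p = F U (S U) + Φ (E (p - S U)) (E (p - S U)) := by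
    intro U p
    have h : ∀ q, ((U, q) : Sym2M × Sym2M × Sym2M) = (U, 0) + E q := fun q => by simp [E]
    rw [hF, hF, h p, h (S U)]
    exact hs (U, 0) p
  refine ⟨fun U => (S U).1, fun U => (S U).2, fun U => ⟨fun p => ?_, fun p hp => ?_⟩,
    ⟨fun a b => by simp, fun c a => by simp⟩, fun U => ?_⟩
  · rw [hsplit U p]
    exact le_add_of_nonneg_right (hΦnn _)
  · by_contra hne
    have h1 := hp (S U)
    rw [hsplit U p] at h1
    have h2 := hpos (p - S U) (sub_ne_zero.2 hne)
    linarith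
  · set p₀ : Sym2M × Sym2M := ((3 / 4 : ℝ) • U, (1 / 4 : ℝ) • U) with hp₀
    have h1 : F U p₀ ≤ CW * (frobSq2 U / 64) := by
      rw [hF, ← integral_strain_trial]
      exact hΦup _
    have h2 : 0 ≤ F U (S U) := by rw [hF]; exact hΦnn _
    have h3 := hElow (S U - p₀)
    have h4 : Φ (E (S U - p₀)) (E (S U - p₀)) = Φ (E (p₀ - S U)) (E (p₀ - S U)) := by
      rw [← neg_sub p₀ (S U)]; simp only [map_neg, LinearMap.neg_apply, neg_neg]
    have h5 := hsplit U p₀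
    have h6 : (1 / CW) * (frobSq2 (S U - p₀).1 / 12 + frobSq2 (S U - p₀).2)
        ≤ CW * (frobSq2 U / 64) := by linarith
    have h7 : frobSq2 (S U - p₀).1 ≤ (√3 * CW / 4) ^ 2 * frobSq2 U := by
      rw [one_div, inv_mul_le_iff₀ hCW] at h6
      have := frobSq2_nonneg (S U - p₀).2
      rw [div_pow, mul_pow, Real.sq_sqrt (by norm_num)]
      linarith
    have h8 : √(frobSq2 (S U - p₀).1) ≤ √3 * CW / 4 * √(frobSq2 U) := by
      refine (Real.sqrt_le_sqrt h7).trans_eq ?_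
      rw [Real.sqrt_mul (sq_nonneg _), Real.sqrt_sq (by positivity)]
    have h9 : √(frobSq2 (p₀.1 : M2)) = 3 / 4 * √(frobSq2 U) := by
      change √(frobSq2 ((3 / 4 : ℝ) • (U : M2))) = _
      rw [frobSq2_smul, Real.sqrt_mul (sq_nonneg _), Real.sqrt_sq (by norm_num)]
    have h10 := sqrt_frobSq2_add_le (S U - p₀).1 p₀.1
    have h11 : ((S U - p₀).1 : M2) + p₀.1 = (S U).1 := by simp
    rw [h11] at h10
    linarith
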